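/- For every n ≥ 1, the number of equivalence classes of 2-dimensional extremal (0,1)-matrices of order n equals ⌊(n+1)/2⌋. -/

import Mathlib

open Finset

/-- The sum of the entries of `k` over the hyperplane `Γ_{i,j}`. -/
def hypSum {d n : ℕ} (k : (Fin d → Fin n) → ℝ) (i : Fin d) (j : Fin n) : ℝ :=
  ∑ α ∈ Finset.univ.filter (fun α : Fin d → Fin n => α i = j), k α

/-- `k` is a polyplex of weight `W` in the `d`-dimensional (0,1)-matrix `A` of order `n`. -/
def IsPolyplex {d n : ℕ} (A : (Fin d → Fin n) → Bool) (k : (Fin d → Fin n) → ℝ) (W : ℝ) : Prop :=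
  (∀ α, 0 ≤ k α) ∧ (∀ α, A α = false → k α = 0) ∧
  (∀ i j, hypSum k i j ≤ 1) ∧ (∑ α, k α) = W

/-- `k` is a polydiagonal in `A`: a nonnegative weighting of the support whose sum over
every hyperplane equals `1`. -/
def IsPolydiagonal {d n : ℕ} (A : (Fin d → Fin n) → Bool) (k : (Fin d → Fin n) → ℝ) : Prop :=
  (∀ α, 0 ≤ k α) ∧ (∀ α, A α = false → k α = 0) ∧ (∀ i j, hypSum k i j = 1)

def HasPolydiagonal {d n : ℕ} (A : (Fin d → Fin n) → Bool) : Prop :=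
  ∃ k, IsPolydiagonal A k

/-- The matrix obtained from `A` by additionally setting the entry at `β` to `1`. -/
def addEntry {d n : ℕ} (A : (Fin d → Fin n) → Bool) (β : Fin d → Fin n) :
    (Fin d → Fin n) → Bool :=
  fun α => if α = β then true else A α

/-- `A` is extremal: it has no polydiagonal, and adding any entry creates one. -/
def IsExtremal {d n : ℕ} (A : (Fin d → Fin n) → Bool) : Prop :=
  ¬ HasPolydiagonal A ∧ ∀ β, A β = false → HasPolydiagonal (addEntry A β)

/-- `Λ` is a hyperplane cover of `A`. -/
def IsCover {d n : ℕ} (A : (Fin d → Fin n) → Bool) (Λ : Fin d → Fin n → ℝ) : Prop :=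
  (∀ i j, 0 ≤ Λ i j) ∧ ∀ α, A α = true → 1 ≤ ∑ i, Λ i (α i)

/-- The weight of a hyperplane cover. -/
def coverWeight {d n : ℕ} (Λ : Fin d → Fin n → ℝ) : ℝ := ∑ i, ∑ j, Λ i j

/-- `Λ` is an optimal hyperplane cover of `A`: a cover of minimum weight. -/
def IsOptimalCover {d n : ℕ} (A : (Fin d → Fin n) → Bool) (Λ : Fin d → Fin n → ℝ) : Prop :=
  IsCover A Λ ∧ ∀ Λ', IsCover A Λ' → coverWeight Λ ≤ coverWeight Λ'

/-- `A` is a threshold matrix. -/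
def IsThreshold {d n : ℕ} (A : (Fin d → Fin n) → Bool) : Prop :=
  ∃ Λ : Fin d → Fin n → ℝ, (∀ i j, 0 ≤ Λ i j) ∧
    ∀ α, (A α = true ↔ 1 ≤ ∑ i, Λ i (α i))

/-- `A` and `B` are equivalent: `B` is obtained from `A` by permuting directions and
permuting parallel hyperplanes, i.e. `B(α) = A(β)` where `β (π i) = σ i (α i)`. -/
def MatEquiv {d n : ℕ} (A B : (Fin d → Fin n) → Bool) : Prop :=
  ∃ (π : Equiv.Perm (Fin d)) (σ : Fin d → Equiv.Perm (Fin n)),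
    ∀ α, B α = A (fun j => σ (π.symm j) (α (π.symm j)))

/-- The rate of the hyperplane `Γ_{i,j}` of `A`: the number of ones it contains. -/
def rate {d n : ℕ} (A : (Fin d → Fin n) → Bool) (i : Fin d) (j : Fin n) : ℕ :=
  (Finset.univ.filter (fun α : Fin d → Fin n => A α = true ∧ α i = j)).card

/-- The profile of `A`: the multiset of the rates of all its `d·n` hyperplanes. -/
def profile {d n : ℕ} (A : (Fin d → Fin n) → Bool) : Multiset ℕ :=
  (Finset.univ : Finset (Fin d × Fin n)).val.map (fun p => rate A p.1 p.2)


/-!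
By Hall's theorem, a matrix of order `n` fails to have a polydiagonal exactly when it has an
all-zero block `R × S` with `#R + #S > n`. Hence a matrix is extremal exactly when its zeros form
a single rectangle `R × S` with `#R + #S = n + 1`. Permuting rows and columns makes `R` and `S`
arbitrary sets of the given sizes and transposition exchanges them, so a class is determined by
`m = min #R #S`, which ranges over `1, …, ⌊(n + 1) / 2⌋`. Different `m` give inequivalent matrices
because the number of zeros, `m * (n + 1 - m)`, is an invariant.
-/

section General

lemma vecCons_zero_one_eq {X : Type*} (v : Fin 2 → X) : ![v 0, v 1] = v :=
  (finTwoArrowEquiv X).symm_apply_apply v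

lemma nonempty_and_nonempty_of_card_lt_card_add_card {ι : Type*} [Fintype ι] {s t : Finset ι}
    (h : Fintype.card ι < #s + #t) : s.Nonempty ∧ t.Nonempty := by
  have hs := s.card_le_univ
  have ht := t.card_le_univ
  exact ⟨card_pos.1 (by lia), card_pos.1 (by lia)⟩

lemma eq_or_eq_of_add_eq_add_of_mul_eq_mul {R : Type*} [CommRing R] [NoZeroDivisors R]
    {a b c d : R} (hadd : a + b = c + d) (hmul : a * b = c * d) : a = c ∨ a = d := by
  have hroot : (a - c) * (a - d) = 0 := by linear_combination a * hadd - hmul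
  simpa only [mul_eq_zero, sub_eq_zero] using hroot

end General

section Equivalence

variable {d n : ℕ} {A B C : (Fin d → Fin n) → Bool}

lemma MatEquiv.trans (hAB : MatEquiv A B) (hBC : MatEquiv B C) : MatEquiv A C := by
  obtain ⟨π, σ, hB⟩ := hAB
  obtain ⟨ρ, τ, hC⟩ := hBC
  refine ⟨π * ρ, fun i => σ (ρ i) * τ i, fun α => ?_⟩
  simp [hC, hB, Equiv.Perm.mul_def]

/-- The number of zero entries of a matrix, an invariant that separates the equivalence classes of
extremal matrices. -/
def zeroCount (A : (Fin d → Fin n) → Bool) : ℕ :=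
  #{α | A α = false}

lemma MatEquiv.zeroCount_eq (h : MatEquiv A B) : zeroCount A = zeroCount B := by
  obtain ⟨π, σ, hB⟩ := h
  let reindex : (Fin d → Fin n) ≃ (Fin d → Fin n) :=
    (Equiv.piCongrRight σ).trans (Equiv.arrowCongr π (Equiv.refl _))
  have hreindex (α) : B α = A (reindex α) := hB α
  exact (card_equiv reindex (by simp [hreindex])).symm

end Equivalence

section TwoDimensional

variable {n : ℕ}

section HypSum

variable (k : (Fin 2 → Fin n) → ℝ)

lemma hypSum_zero (i : Fin n) : hypSum k 0 i = ∑ j, k ![i, j] := by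
  simp [hypSum, sum_filter, ← (finTwoArrowEquiv (Fin n)).symm.sum_comp, Fintype.sum_prod_type_right]

lemma hypSum_one (j : Fin n) : hypSum k 1 j = ∑ i, k ![i, j] := by
  simp [hypSum, sum_filter, ← (finTwoArrowEquiv (Fin n)).symm.sum_comp, Fintype.sum_prod_type]

end HypSum

variable {A : (Fin 2 → Fin n) → Bool} {R R' S S' : Finset (Fin n)}

/-- The block of `A` with rows `R` and columns `S` consists of zeros. Such a block with
`#R + #S > n` is the obstruction to a polydiagonal. -/
def IsZeroBlock (A : (Fin 2 → Fin n) → Bool) (R S : Finset (Fin n)) : Prop :=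
  ∀ α, α 0 ∈ R → α 1 ∈ S → A α = false

section Polydiagonal

lemma HasPolydiagonal.card_add_card_le (hA : HasPolydiagonal A) (hRS : IsZeroBlock A R S) :
    #R + #S ≤ n := by
  obtain ⟨k, k_nonneg, k_supp, k_sum⟩ := hA
  have row_sum (i) (hi : i ∈ R) : ∑ j ∈ Sᶜ, k ![i, j] = 1 := by
    rw [← k_sum 0 i, hypSum_zero]
    refine sum_subset (subset_univ _) fun j _ hj => k_supp _ (hRS _ hi ?_)
    simpa using hj
  have col_sum (j) : ∑ i ∈ R, k ![i, j] ≤ 1 := by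
    rw [← k_sum 1 j, hypSum_one]
    exact sum_le_sum_of_subset_of_nonneg (subset_univ _) fun _ _ _ => k_nonneg _
  have hcard : (#R : ℝ) ≤ #Sᶜ := calc
    (#R : ℝ) = ∑ i ∈ R, ∑ j ∈ Sᶜ, k ![i, j] := by simp [sum_congr rfl row_sum]
    _ = ∑ j ∈ Sᶜ, ∑ i ∈ R, k ![i, j] := sum_comm
    _ ≤ ∑ _j ∈ Sᶜ, 1 := sum_le_sum fun j _ => col_sum j
    _ = #Sᶜ := by simp
  calc
    #R + #S ≤ #Sᶜ + #S := Nat.add_le_add_right (by exact_mod_cast hcard) _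
    _ = n := by rw [card_compl_add_card, Fintype.card_fin]

lemma hasPolydiagonal_of_perm (f : Equiv.Perm (Fin n)) (hf : ∀ i, A ![i, f i] = true) :
    HasPolydiagonal A := by
  refine ⟨fun α => if f (α 0) = α 1 then 1 else 0, fun α => by positivity, fun α hα => ?_, ?_⟩
  · refine if_neg fun hfα => ?_
    simpa [hfα, vecCons_zero_one_eq, hα] using hf (α 0)
  · rw [Fin.forall_fin_two]
    exact ⟨fun i => by simp [hypSum_zero],
      fun j => by simp [hypSum_one, ← Equiv.eq_symm_apply]⟩

lemma exists_perm_of_isZeroBlock_card_le (h : ∀ R S, IsZeroBlock A R S → #R + #S ≤ n) :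
    ∃ f : Equiv.Perm (Fin n), ∀ i, A ![i, f i] = true := by
  let ones (i : Fin n) : Finset (Fin n) := {j | A ![i, j] = true}
  have hall (R : Finset (Fin n)) : #R ≤ #(R.biUnion ones) := by
    have hblock : IsZeroBlock A R (R.biUnion ones)ᶜ := by
      intro α hα₀ hα₁
      simp only [ones, mem_compl, mem_biUnion, mem_filter_univ, not_exists, not_and,
        Bool.not_eq_true] at hα₁
      simpa only [vecCons_zero_one_eq] using hα₁ (α 0) hα₀
    have hle := h _ _ hblock
    have hcompl := card_add_card_compl (R.biUnion ones)
    rw [Fintype.card_fin] at hcompl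
    lia
  obtain ⟨f, f_inj, hf⟩ := (all_card_le_biUnion_card_iff_exists_injective ones).1 hall
  have hf (i) : A ![i, f i] = true := by simpa [ones] using hf i
  exact ⟨Equiv.ofBijective f (Finite.injective_iff_bijective.1 f_inj), hf⟩

theorem hasPolydiagonal_iff_forall_isZeroBlock :
    HasPolydiagonal A ↔ ∀ R S, IsZeroBlock A R S → #R + #S ≤ n := by
  refine ⟨fun hA _ _ => hA.card_add_card_le, fun h => ?_⟩
  obtain ⟨f, hf⟩ := exists_perm_of_isZeroBlock_card_le h
  exact hasPolydiagonal_of_perm f hf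

end Polydiagonal

section Extremal

lemma isZeroBlock_addEntry_iff {β : Fin 2 → Fin n} :
    IsZeroBlock (addEntry A β) R S ↔ IsZeroBlock A R S ∧ ¬(β 0 ∈ R ∧ β 1 ∈ S) := by
  have addEntry_eq_false (α) : addEntry A β α = false ↔ A α = false ∧ α ≠ β := by
    simp [addEntry, and_comm]
  simp only [IsZeroBlock, addEntry_eq_false]
  grind

/-- The matrix whose zeros are exactly the positions in `R × S`; every extremal matrix has this
form. -/
def zeroRectangle (R S : Finset (Fin n)) : (Fin 2 → Fin n) → Bool :=
  fun α => !decide (α 0 ∈ R ∧ α 1 ∈ S)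

lemma zeroRectangle_eq_false_iff {α : Fin 2 → Fin n} :
    zeroRectangle R S α = false ↔ α 0 ∈ R ∧ α 1 ∈ S := by
  simp [zeroRectangle]

lemma isZeroBlock_zeroRectangle (R S : Finset (Fin n)) : IsZeroBlock (zeroRectangle R S) R S :=
  fun _ h₀ h₁ => zeroRectangle_eq_false_iff.2 ⟨h₀, h₁⟩

lemma IsZeroBlock.subset_of_zeroRectangle (h : IsZeroBlock (zeroRectangle R S) R' S')
    (hR' : R'.Nonempty) (hS' : S'.Nonempty) : R' ⊆ R ∧ S' ⊆ S := by
  have hmem (i) (hi : i ∈ R') (j) (hj : j ∈ S') : i ∈ R ∧ j ∈ S :=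
    zeroRectangle_eq_false_iff.1 (h ![i, j] hi hj)
  obtain ⟨r, hr⟩ := hR'
  obtain ⟨s, hs⟩ := hS'
  exact ⟨fun i hi => (hmem i hi s hs).1, fun j hj => (hmem r hr j hj).2⟩

lemma isExtremal_zeroRectangle (hcard : #R + #S = n + 1) : IsExtremal (zeroRectangle R S) := by
  constructor
  · intro hA
    have := hA.card_add_card_le (isZeroBlock_zeroRectangle R S)
    lia
  · intro β hβ
    refine hasPolydiagonal_iff_forall_isZeroBlock.2 fun R' S' hblock => ?_
    obtain ⟨hblock, hβ'⟩ := isZeroBlock_addEntry_iff.1 hblock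
    by_contra! hlt
    obtain ⟨hR', hS'⟩ := nonempty_and_nonempty_of_card_lt_card_add_card
      (by rwa [Fintype.card_fin] : Fintype.card (Fin n) < #R' + #S')
    obtain ⟨hRR, hSS⟩ := hblock.subset_of_zeroRectangle hR' hS'
    have hR_card := card_le_card hRR
    have hS_card := card_le_card hSS
    obtain rfl := eq_of_subset_of_card_le hRR (by lia)
    obtain rfl := eq_of_subset_of_card_le hSS (by lia)
    exact hβ' (zeroRectangle_eq_false_iff.1 hβ)

lemma IsExtremal.eq_zeroRectangle (hA : IsExtremal A) (hRS : IsZeroBlock A R S)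
    (hlt : n < #R + #S) : A = zeroRectangle R S := by
  have hzero (α) : A α = false ↔ α 0 ∈ R ∧ α 1 ∈ S := by
    refine ⟨fun hα => ?_, fun hα => hRS α hα.1 hα.2⟩
    by_contra hmem
    have := (hA.2 α hα).card_add_card_le (isZeroBlock_addEntry_iff.2 ⟨hRS, hmem⟩)
    lia
  ext α
  rw [Bool.eq_iff_iff, ← not_iff_not, Bool.not_eq_true, Bool.not_eq_true, hzero,
    zeroRectangle_eq_false_iff]

lemma IsExtremal.card_add_card_le (hA : IsExtremal A) (hRS : IsZeroBlock A R S) :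
    #R + #S ≤ n + 1 := by
  by_contra! hlt
  obtain ⟨⟨r, hr⟩, ⟨s, hs⟩⟩ := nonempty_and_nonempty_of_card_lt_card_add_card
    (by rw [Fintype.card_fin]; lia : Fintype.card (Fin n) < #R + #S)
  have hblock : IsZeroBlock (addEntry A ![r, s]) (R.erase r) S :=
    isZeroBlock_addEntry_iff.2
      ⟨fun α h₀ h₁ => hRS α (mem_of_mem_erase h₀) h₁, fun h => by simp at h⟩
  have hle := (hA.2 _ (hRS ![r, s] hr hs)).card_add_card_le hblock
  rw [card_erase_of_mem hr] at hle
  lia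

theorem isExtremal_iff_exists_eq_zeroRectangle :
    IsExtremal A ↔ ∃ R S, #R + #S = n + 1 ∧ A = zeroRectangle R S := by
  constructor
  · intro hA
    obtain ⟨R, S, hRS, hlt⟩ : ∃ R S, IsZeroBlock A R S ∧ n < #R + #S := by
      simpa only [hasPolydiagonal_iff_forall_isZeroBlock, not_forall, not_le, exists_prop]
        using hA.1
    exact ⟨R, S, (hA.card_add_card_le hRS).antisymm hlt, hA.eq_zeroRectangle hRS hlt⟩
  · rintro ⟨R, S, hcard, rfl⟩
    exact isExtremal_zeroRectangle hcard

end Extremal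

section Classification

lemma matEquiv_zeroRectangle_of_card_eq (hR : #R' = #R) (hS : #S' = #S) :
    MatEquiv (zeroRectangle R S) (zeroRectangle R' S') := by
  obtain ⟨σ, rfl⟩ := Equiv.Perm.exists_map_finset_eq R' R hR
  obtain ⟨τ, rfl⟩ := Equiv.Perm.exists_map_finset_eq S' S hS
  exact ⟨Equiv.refl _, ![σ, τ], fun α => by simp [zeroRectangle]⟩

lemma matEquiv_zeroRectangle_swap (R S : Finset (Fin n)) :
    MatEquiv (zeroRectangle R S) (zeroRectangle S R) :=
  ⟨Equiv.swap 0 1, 1, fun α => by simp [zeroRectangle, and_comm]⟩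

lemma zeroCount_zeroRectangle (R S : Finset (Fin n)) :
    zeroCount (zeroRectangle R S) = #R * #S := by
  rw [← card_product]
  exact card_equiv (finTwoArrowEquiv (Fin n)) (by simp [zeroRectangle])

/-- The representative of the class of extremal matrices whose rectangle of zeros has shorter side
`m`: the zeros fill the first `m` rows of the first `n + 1 - m` columns. -/
def standardExtremal (n m : ℕ) : (Fin 2 → Fin n) → Bool :=
  zeroRectangle {i | i.val < m} {j | j.val < n + 1 - m}

variable {m : ℕ}

lemma isExtremal_standardExtremal (hm : 1 ≤ m) (hmn : m ≤ n) :
    IsExtremal (standardExtremal n m) := by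
  refine isExtremal_zeroRectangle ?_
  simp only [Fin.card_filter_val_lt]
  lia

lemma zeroCount_standardExtremal (hm : 1 ≤ m) (hmn : m ≤ n) :
    zeroCount (standardExtremal n m) = m * (n + 1 - m) := by
  rw [standardExtremal, zeroCount_zeroRectangle, Fin.card_filter_val_lt, Fin.card_filter_val_lt,
    min_eq_right hmn, min_eq_right (by lia)]

lemma matEquiv_standardExtremal_zeroRectangle (hcard : #R + #S = n + 1) :
    MatEquiv (standardExtremal n #R) (zeroRectangle R S) := by
  have hR := card_finset_fin_le R
  have hS := card_finset_fin_le S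
  refine matEquiv_zeroRectangle_of_card_eq ?_ ?_ <;> rw [Fin.card_filter_val_lt] <;> lia

theorem IsExtremal.exists_matEquiv_standardExtremal (hA : IsExtremal A) :
    ∃ m ∈ Icc 1 ((n + 1) / 2), MatEquiv (standardExtremal n m) A := by
  obtain ⟨R, S, hcard, rfl⟩ := isExtremal_iff_exists_eq_zeroRectangle.1 hA
  have hR := card_finset_fin_le R
  have hS := card_finset_fin_le S
  rcases le_total #R #S with hle | hle
  · exact ⟨#R, mem_Icc.2 (by lia), matEquiv_standardExtremal_zeroRectangle hcard⟩
  · refine ⟨#S, mem_Icc.2 (by lia), ?_⟩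
    exact (matEquiv_standardExtremal_zeroRectangle (by lia)).trans (matEquiv_zeroRectangle_swap S R)

lemma eq_of_zeroCount_standardExtremal_eq {m₁ m₂ : ℕ} (h₁ : m₁ ∈ Icc 1 ((n + 1) / 2))
    (h₂ : m₂ ∈ Icc 1 ((n + 1) / 2))
    (h : zeroCount (standardExtremal n m₁) = zeroCount (standardExtremal n m₂)) : m₁ = m₂ := by
  rw [mem_Icc] at h₁ h₂
  rw [zeroCount_standardExtremal (by lia) (by lia),
    zeroCount_standardExtremal (by lia) (by lia)] at h
  have hadd : (m₁ : ℤ) + (n + 1 - m₁ : ℕ) = m₂ + (n + 1 - m₂ : ℕ) := by lia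
  have := eq_or_eq_of_add_eq_add_of_mul_eq_mul hadd (by exact_mod_cast h)
  lia

end Classification

end TwoDimensional

/-- The number of equivalence classes of 2-dimensional extremal matrices of order n equals
⌊(n+1)/2⌋. -/
theorem stmt_15 (n : ℕ) (hn : 1 ≤ n) :
    Nat.card (Quot (fun A B : {A : (Fin 2 → Fin n) → Bool // IsExtremal A} =>
      MatEquiv A.1 B.1)) = (n + 1) / 2 := by
  let r (A B : {A : (Fin 2 → Fin n) → Bool // IsExtremal A}) : Prop := MatEquiv A.1 B.1
  have hext (m : Icc 1 ((n + 1) / 2)) : IsExtremal (standardExtremal n m) := by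
    have hm := mem_Icc.1 m.2
    exact isExtremal_standardExtremal (by lia) (by lia)
  let toClass (m : Icc 1 ((n + 1) / 2)) : Quot r := Quot.mk r ⟨standardExtremal n m, hext m⟩
  have toClass_bijective : toClass.Bijective := by
    constructor
    · intro m₁ m₂ h
      let classZeroCount : Quot r → ℕ :=
        Quot.lift (fun A => zeroCount A.1) fun _ _ => MatEquiv.zeroCount_eq
      have hzero := congrArg classZeroCount h
      exact Subtype.ext (eq_of_zeroCount_standardExtremal_eq m₁.2 m₂.2 hzero)
    · rintro ⟨A, hA⟩
      obtain ⟨m, hm, hmA⟩ := hA.exists_matEquiv_standardExtremal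
      exact ⟨⟨m, hm⟩, Quot.sound hmA⟩
  calc
    Nat.card (Quot r) = Nat.card (Icc 1 ((n + 1) / 2)) :=
      (Nat.card_eq_of_bijective toClass toClass_bijective).symm
    _ = (n + 1) / 2 := by
      rw [Nat.card_eq_fintype_card, Fintype.card_coe, Nat.card_Icc, Nat.add_sub_cancel]
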